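/- Let α > 0, k > (α+3)/4, T > 0, and let Ã_k(τ,x,y) = τ^{−1/2} ∫_{ℝ} e^{−i·sgn(ξ)·π/4} |ξ|^{1/2} (1+|ξ|^α)^{1/2} (1+ξ²)^{−k} e^{−iτξ/(1+|ξ|^α)} e^{i(x + y²/(4τ))ξ} e^{i(y²/(4τ))ξ|ξ|^α} dξ. Let h : [0,T] → L¹(ℝ²) be continuous. Then for every t ∈ (0,T] the function V(t,x,y) := ∫_{0}^{t} ∫_{ℝ²} Ã_k(t−s, x−x′, y−y′) h(s,x′,y′) dx′dy′ ds is well defined (the s-integrand is bounded by C(t−s)^{−1/2}‖h(s)‖_{L¹}, which is integrable on (0,t)), is continuous and bounded in (x,y), and for every fixed y ∈ ℝ satisfies V(t,x,y) → 0 as |x| → ∞. -/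

import Mathlib

open MeasureTheory Filter

/-- The `ξ`-integrand of the KP-BBM kernel `Ã_k(τ,x,y)`. -/
noncomputable def AkInt (α k τ x y : ℝ) (ξ : ℝ) : ℂ :=
  Complex.exp (-Complex.I * (Real.sign ξ : ℂ) * ((Real.pi / 4 : ℝ) : ℂ)) *
    ((|ξ| ^ (2⁻¹ : ℝ) : ℝ) : ℂ) * (((1 + |ξ| ^ α) ^ (2⁻¹ : ℝ) : ℝ) : ℂ) *
    (((1 + ξ ^ 2) ^ (-k) : ℝ) : ℂ) *
    Complex.exp (-Complex.I * ((τ * ξ / (1 + |ξ| ^ α) : ℝ) : ℂ)) *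
    Complex.exp (Complex.I * (((x + y ^ 2 / (4 * τ)) * ξ : ℝ) : ℂ)) *
    Complex.exp (Complex.I * ((y ^ 2 / (4 * τ) * (ξ * |ξ| ^ α) : ℝ) : ℂ))

/-- The KP-BBM kernel `Ã_k(τ,x,y)`. -/
noncomputable def Ak (α k τ x y : ℝ) : ℂ :=
  ((τ ^ (-(2⁻¹) : ℝ) : ℝ) : ℂ) * ∫ ξ : ℝ, AkInt α k τ x y ξ

/-!
`|Ã_k(τ, ·, ·)| ≤ M τ^{-1/2}`, where `M` is the `L¹` norm of the amplitude: that amplitude is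
`O((1 + ξ²)^{(1 + α)/4 - k})`, and the exponent is below `-1/2` exactly when `k > (α + 3)/4`.
The variable `x` enters the phase only through `e^{ixξ}`, so `Ã_k(τ, x, y) → 0` as `|x| → ∞` by the
Riemann–Lebesgue lemma. Since `τ^{-1/2}` is integrable at `0`, dominated convergence, first in
`(x', y')` and then in `s`, carries continuity and decay from the kernel over to `V`.
-/

open Set Topology

section IntegralAgainstBoundedFunction

variable {X 𝕜 E : Type*} [MeasurableSpace X] {μ : Measure X}
  [NormedField 𝕜] [NormedAddCommGroup E] [NormedSpace ℝ E] [NormedSpace 𝕜 E]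

theorem norm_integral_smul_le_mul_integral_norm {φ : X → 𝕜} {f : X → E} {C : ℝ}
    (hφ : ∀ᵐ x ∂μ, ‖φ x‖ ≤ C) (hf : Integrable f μ) :
    ‖∫ x, φ x • f x ∂μ‖ ≤ C * ∫ x, ‖f x‖ ∂μ := by
  rw [← integral_const_mul]
  refine norm_integral_le_of_norm_le (hf.norm.const_mul C) ?_
  filter_upwards [hφ] with x hx
  rw [norm_smul]
  gcongr

theorem tendsto_integral_smul_of_tendsto_L1 {ι : Type*} {l : Filter ι} [l.IsCountablyGenerated]
    {φ : ι → X → 𝕜} {ψ : X → 𝕜} {f : ι → X → E} {g : X → E} {C : ℝ}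
    (hφ : ∀ᶠ i in l, AEStronglyMeasurable (φ i) μ) (hφC : ∀ᶠ i in l, ∀ᵐ x ∂μ, ‖φ i x‖ ≤ C)
    (hφψ : ∀ᵐ x ∂μ, Tendsto (fun i => φ i x) l (𝓝 (ψ x)))
    (hf : ∀ᶠ i in l, Integrable (f i) μ) (hg : Integrable g μ)
    (hfg : Tendsto (fun i => ∫ x, ‖f i x - g x‖ ∂μ) l (𝓝 0)) :
    Tendsto (fun i => ∫ x, φ i x • f i x ∂μ) l (𝓝 (∫ x, ψ x • g x ∂μ)) := by
  have h_diff : Tendsto (fun i => ∫ x, φ i x • (f i x - g x) ∂μ) l (𝓝 0) := by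
    refine squeeze_zero_norm' ?_ (by simpa only [mul_zero] using hfg.const_mul C)
    filter_upwards [hφC, hf] with i hCi hfi
    exact norm_integral_smul_le_mul_integral_norm hCi (hfi.sub hg)
  have h_fixed : Tendsto (fun i => ∫ x, φ i x • g x ∂μ) l (𝓝 (∫ x, ψ x • g x ∂μ)) := by
    refine tendsto_integral_filter_of_dominated_convergence (fun x => C * ‖g x‖) ?_ ?_
      (hg.norm.const_mul C) ?_
    · filter_upwards [hφ] with i hi using hi.smul hg.aestronglyMeasurable
    · filter_upwards [hφC] with i hi
      filter_upwards [hi] with x hx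
      rw [norm_smul]
      gcongr
    · filter_upwards [hφψ] with x hx using hx.smul_const (g x)
  rw [← zero_add (∫ x, ψ x • g x ∂μ)]
  refine (h_diff.add h_fixed).congr' ?_
  filter_upwards [hφ, hφC, hf] with i hi hCi hfi
  have h_int_diff : Integrable (fun x => φ i x • (f i x - g x)) μ :=
    (hfi.sub hg).bdd_smul C hi hCi
  have h_int_fixed : Integrable (fun x => φ i x • g x) μ := hg.bdd_smul C hi hCi
  rw [← integral_add h_int_diff h_int_fixed]
  simp only [smul_sub, sub_add_cancel]

end IntegralAgainstBoundedFunction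

section L1ContinuousOn

variable {T X E : Type*} [TopologicalSpace T] [MeasurableSpace X] {μ : Measure X}
  [NormedAddCommGroup E] {h : T → X → E} {S : Set T}

/-- Continuity on `S` of a family `s ↦ h s` with values in `L¹(μ)`, phrased for representatives
`h s` rather than for elements of `Lp`. -/
structure L1ContinuousOn (h : T → X → E) (S : Set T) (μ : Measure X) : Prop where
  integrable : ∀ s ∈ S, Integrable (h s) μ
  tendsto : ∀ s ∈ S, Tendsto (fun s' => ∫ p, ‖h s' p - h s p‖ ∂μ) (𝓝[S] s) (𝓝 0)

namespace L1ContinuousOn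

theorem mono (hh : L1ContinuousOn h S μ) {S' : Set T} (hS : S' ⊆ S) : L1ContinuousOn h S' μ where
  integrable s hs := hh.integrable s (hS hs)
  tendsto s hs := (hh.tendsto s (hS hs)).mono_left (nhdsWithin_mono s hS)

theorem continuousOn_integral_norm (hh : L1ContinuousOn h S μ) :
    ContinuousOn (fun s => ∫ p, ‖h s p‖ ∂μ) S := by
  intro s hs
  refine tendsto_iff_dist_tendsto_zero.2
    (squeeze_zero' (.of_forall fun _ => dist_nonneg) ?_ (hh.tendsto s hs))
  filter_upwards [self_mem_nhdsWithin] with s' hs'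
  rw [dist_eq_norm, ← integral_sub (hh.integrable s' hs').norm (hh.integrable s hs).norm]
  exact norm_integral_le_of_norm_le ((hh.integrable s' hs').sub (hh.integrable s hs)).norm
    (.of_forall fun p => abs_norm_sub_norm_le _ _)

end L1ContinuousOn

theorem integrableOn_Icc_sub_rpow {r t : ℝ} (hr : -1 < r) (ht : 0 ≤ t) :
    IntegrableOn (fun s => (t - s) ^ r) (Icc 0 t) := by
  have h_int : IntervalIntegrable (fun s => (t - s) ^ r) volume t 0 := by
    simpa only [sub_self, sub_zero] using
      (intervalIntegral.intervalIntegrable_rpow' (a := 0) (b := t) hr).comp_sub_left t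
  exact (intervalIntegrable_iff_integrableOn_Icc_of_le ht).1 h_int.symm

theorem L1ContinuousOn.integrableOn_sub_rpow_mul_integral_norm {h : ℝ → X → E} {r t : ℝ}
    (hr : -1 < r) (ht : 0 ≤ t) (hh : L1ContinuousOn h (Icc 0 t) μ) :
    IntegrableOn (fun s => (t - s) ^ r * ∫ p, ‖h s p‖ ∂μ) (Ioo 0 t) :=
  ((integrableOn_Icc_sub_rpow hr ht).mul_continuousOn hh.continuousOn_integral_norm
    isCompact_Icc).mono_set Ioo_subset_Icc_self

end L1ContinuousOn

section DominatedKernel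

variable {T Q X 𝕜 E : Type*} [TopologicalSpace T] [MeasurableSpace X] {μ : Measure X}
  [NormedField 𝕜] [NormedAddCommGroup E] [NormedSpace 𝕜 E]

/-- A kernel `K s q p` with time `s ∈ S`, output variable `q` and integration variable `p`, which is
measurable in `p`, continuous in `s`, and bounded uniformly in `q` and `p` by a continuous function
`b` of time. In a Duhamel term at time `t`, `b s` is allowed to blow up as `s → t`. -/
structure IsDominatedKernel (K : T → Q → X → 𝕜) (b : T → ℝ) (S : Set T) (μ : Measure X) :
    Prop where
  aestronglyMeasurable : ∀ s ∈ S, ∀ q, AEStronglyMeasurable (K s q) μ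
  continuousOn : ∀ q p, ContinuousOn (fun s => K s q p) S
  continuousOn_bound : ContinuousOn b S
  norm_le : ∀ s ∈ S, ∀ q p, ‖K s q p‖ ≤ b s

namespace IsDominatedKernel

variable {K : T → Q → X → 𝕜} {b : T → ℝ} {S : Set T} {h : T → X → E}

theorem integrable_smul (hK : IsDominatedKernel K b S μ) {s : T} (hs : s ∈ S) (q : Q) {f : X → E}
    (hf : Integrable f μ) : Integrable (fun p => K s q p • f p) μ :=
  hf.bdd_smul (b s) (hK.aestronglyMeasurable s hs q) (.of_forall (hK.norm_le s hs q))

variable [NormedSpace ℝ E]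

theorem norm_integral_smul_le (hK : IsDominatedKernel K b S μ) {s : T} (hs : s ∈ S) (q : Q)
    {f : X → E} (hf : Integrable f μ) : ‖∫ p, K s q p • f p ∂μ‖ ≤ b s * ∫ p, ‖f p‖ ∂μ :=
  norm_integral_smul_le_mul_integral_norm (.of_forall (hK.norm_le s hs q)) hf

theorem tendsto_integral_smul (hK : IsDominatedKernel K b S μ) {s : T} (hs : s ∈ S) {ι : Type*}
    {l : Filter ι} [l.IsCountablyGenerated] {u : ι → Q} {ψ : X → 𝕜}
    (hψ : ∀ p, Tendsto (fun i => K s (u i) p) l (𝓝 (ψ p))) {f : X → E} (hf : Integrable f μ) :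
    Tendsto (fun i => ∫ p, K s (u i) p • f p ∂μ) l (𝓝 (∫ p, ψ p • f p ∂μ)) :=
  tendsto_integral_smul_of_tendsto_L1 (.of_forall fun i => hK.aestronglyMeasurable s hs (u i))
    (.of_forall fun i => .of_forall (hK.norm_le s hs (u i))) (.of_forall hψ)
    (.of_forall fun _ => hf) hf
    (by simp only [sub_self, norm_zero, integral_zero, tendsto_const_nhds])

theorem continuousOn_integral_smul [FirstCountableTopology T] (hK : IsDominatedKernel K b S μ)
    (hh : L1ContinuousOn h S μ) (q : Q) : ContinuousOn (fun s => ∫ p, K s q p • h s p ∂μ) S := by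
  intro s hs
  have h_bound : ∀ᶠ s' in 𝓝[S] s, ∀ᵐ p ∂μ, ‖K s' q p‖ ≤ b s + 1 := by
    filter_upwards [self_mem_nhdsWithin,
      (hK.continuousOn_bound s hs).eventually_lt_const (lt_add_one (b s))] with s' hs' hlt
    exact .of_forall fun p => (hK.norm_le s' hs' q p).trans hlt.le
  refine tendsto_integral_smul_of_tendsto_L1 ?_ h_bound
    (.of_forall fun p => hK.continuousOn q p s hs) ?_ (hh.integrable s hs) (hh.tendsto s hs)
  · filter_upwards [self_mem_nhdsWithin] with s' hs' using hK.aestronglyMeasurable s' hs' q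
  · filter_upwards [self_mem_nhdsWithin] with s' hs' using hh.integrable s' hs'

section TimeIntegral

variable [MeasurableSpace T] {ν : Measure T}

theorem ae_norm_integral_smul_le (hK : IsDominatedKernel K b S μ) (hS : MeasurableSet S)
    (hh : ∀ s ∈ S, Integrable (h s) μ) (q : Q) :
    ∀ᵐ s ∂ν.restrict S, ‖∫ p, K s q p • h s p ∂μ‖ ≤ b s * ∫ p, ‖h s p‖ ∂μ :=
  ae_restrict_of_forall_mem hS fun s hs => hK.norm_integral_smul_le hs q (hh s hs)

theorem norm_setIntegral_integral_smul_le (hK : IsDominatedKernel K b S μ) (hS : MeasurableSet S)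
    (hh : ∀ s ∈ S, Integrable (h s) μ) (hb : IntegrableOn (fun s => b s * ∫ p, ‖h s p‖ ∂μ) S ν)
    (q : Q) :
    ‖∫ s in S, ∫ p, K s q p • h s p ∂μ ∂ν‖ ≤ ∫ s in S, b s * ∫ p, ‖h s p‖ ∂μ ∂ν :=
  norm_integral_le_of_norm_le hb (hK.ae_norm_integral_smul_le hS hh q)

variable [SecondCountableTopology T] [OpensMeasurableSpace T]

theorem integrableOn_integral_smul (hK : IsDominatedKernel K b S μ) (hS : MeasurableSet S)
    (hh : L1ContinuousOn h S μ) (hb : IntegrableOn (fun s => b s * ∫ p, ‖h s p‖ ∂μ) S ν) (q : Q) :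
    IntegrableOn (fun s => ∫ p, K s q p • h s p ∂μ) S ν :=
  hb.mono' ((hK.continuousOn_integral_smul hh q).aestronglyMeasurable hS)
    (hK.ae_norm_integral_smul_le hS hh.integrable q)

theorem tendsto_setIntegral_integral_smul (hK : IsDominatedKernel K b S μ) (hS : MeasurableSet S)
    (hh : L1ContinuousOn h S μ) (hb : IntegrableOn (fun s => b s * ∫ p, ‖h s p‖ ∂μ) S ν)
    {ι : Type*} {l : Filter ι} [l.IsCountablyGenerated] {u : ι → Q} {ψ : T → X → 𝕜}
    (hψ : ∀ s ∈ S, ∀ p, Tendsto (fun i => K s (u i) p) l (𝓝 (ψ s p))) :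
    Tendsto (fun i => ∫ s in S, ∫ p, K s (u i) p • h s p ∂μ ∂ν) l
      (𝓝 (∫ s in S, ∫ p, ψ s p • h s p ∂μ ∂ν)) :=
  tendsto_integral_filter_of_dominated_convergence _
    (.of_forall fun i => (hK.integrableOn_integral_smul hS hh hb (u i)).aestronglyMeasurable)
    (.of_forall fun i => hK.ae_norm_integral_smul_le hS hh.integrable (u i)) hb
    (ae_restrict_of_forall_mem hS fun s hs =>
      hK.tendsto_integral_smul hs (hψ s hs) (hh.integrable s hs))

theorem continuous_setIntegral_integral_smul [TopologicalSpace Q] [FirstCountableTopology Q]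
    (hK : IsDominatedKernel K b S μ) (hS : MeasurableSet S) (hh : L1ContinuousOn h S μ)
    (hb : IntegrableOn (fun s => b s * ∫ p, ‖h s p‖ ∂μ) S ν)
    (hKc : ∀ s ∈ S, ∀ p, Continuous fun q => K s q p) :
    Continuous fun q => ∫ s in S, ∫ p, K s q p • h s p ∂μ ∂ν :=
  continuous_iff_continuousAt.2 fun q =>
    hK.tendsto_setIntegral_integral_smul hS hh hb (u := id) fun s hs p => (hKc s hs p).tendsto q

end TimeIntegral

end IsDominatedKernel

end DominatedKernel

instance isCountablyGenerated_cocompact_of_properSpace {E : Type*} [SeminormedAddGroup E]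
    [ProperSpace E] : (cocompact E).IsCountablyGenerated := by
  rw [← Metric.cobounded_eq_cocompact, ← comap_norm_atTop]
  infer_instance

theorem tendsto_integral_exp_I_mul_smul_cocompact {E : Type*} [NormedAddCommGroup E]
    [NormedSpace ℂ E] (f : ℝ → E) :
    Tendsto (fun x : ℝ => ∫ ξ : ℝ, Complex.exp (Complex.I * (x * ξ : ℝ)) • f ξ)
      (cocompact ℝ) (𝓝 0) := by
  have h_scale : Tendsto (fun x : ℝ => x * -(2 * Real.pi)⁻¹) (cocompact ℝ) (cocompact ℝ) :=
    tendsto_cocompact_mul_right₀ (neg_ne_zero.2 (inv_ne_zero Real.two_pi_pos.ne'))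
  refine ((Real.tendsto_integral_exp_smul_cocompact f).comp h_scale).congr fun x => ?_
  have h_phase (ξ : ℝ) : 2 * Real.pi * -(ξ * (x * -(2 * Real.pi)⁻¹)) = x * ξ := by
    field_simp
  simp only [Function.comp_apply, Circle.smul_def, Real.fourierChar_apply, h_phase,
    mul_comm Complex.I]

section Kernel

variable {α k τ : ℝ}

/-- The amplitude `|ξ|^{1/2} (1 + |ξ|^α)^{1/2} (1 + ξ²)^{-k}` of `AkInt`. -/
noncomputable def akAmplitude (α k ξ : ℝ) : ℝ :=
  |ξ| ^ (2⁻¹ : ℝ) * (1 + |ξ| ^ α) ^ (2⁻¹ : ℝ) * (1 + ξ ^ 2) ^ (-k)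

/-- The phase of `AkInt`: the sum of the exponents of its four oscillating factors, divided by
`i`. -/
noncomputable def akPhase (α τ x y ξ : ℝ) : ℝ :=
  -(Real.sign ξ * (Real.pi / 4)) - τ * ξ / (1 + |ξ| ^ α) + (x + y ^ 2 / (4 * τ)) * ξ +
    y ^ 2 / (4 * τ) * (ξ * |ξ| ^ α)

theorem AkInt_eq_exp_akPhase_mul_akAmplitude (α k τ x y ξ : ℝ) :
    AkInt α k τ x y ξ = Complex.exp (Complex.I * akPhase α τ x y ξ) * akAmplitude α k ξ := by
  have h_exp : Complex.exp (Complex.I * akPhase α τ x y ξ) =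
      Complex.exp (-Complex.I * (Real.sign ξ : ℂ) * ((Real.pi / 4 : ℝ) : ℂ)) *
      Complex.exp (-Complex.I * ((τ * ξ / (1 + |ξ| ^ α) : ℝ) : ℂ)) *
      Complex.exp (Complex.I * (((x + y ^ 2 / (4 * τ)) * ξ : ℝ) : ℂ)) *
      Complex.exp (Complex.I * ((y ^ 2 / (4 * τ) * (ξ * |ξ| ^ α) : ℝ) : ℂ)) := by
    simp only [← Complex.exp_add, akPhase]
    congr 1
    push_cast
    ring
  rw [h_exp, AkInt, akAmplitude]
  push_cast
  ring

theorem akAmplitude_nonneg (α k ξ : ℝ) : 0 ≤ akAmplitude α k ξ := by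
  unfold akAmplitude
  positivity

theorem norm_AkInt (α k τ x y ξ : ℝ) : ‖AkInt α k τ x y ξ‖ = akAmplitude α k ξ := by
  rw [AkInt_eq_exp_akPhase_mul_akAmplitude, norm_mul, mul_comm Complex.I,
    Complex.norm_exp_ofReal_mul_I, one_mul, Complex.norm_of_nonneg (akAmplitude_nonneg α k ξ)]

theorem AkInt_eq_exp_mul_AkInt_zero (α k τ x y ξ : ℝ) :
    AkInt α k τ x y ξ = Complex.exp (Complex.I * (x * ξ : ℝ)) * AkInt α k τ 0 y ξ := by
  have h_phase : akPhase α τ x y ξ = x * ξ + akPhase α τ 0 y ξ := by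
    unfold akPhase
    ring
  rw [AkInt_eq_exp_akPhase_mul_akAmplitude, AkInt_eq_exp_akPhase_mul_akAmplitude, h_phase,
    Complex.ofReal_add, mul_add, Complex.exp_add, mul_assoc]

theorem measurable_real_sign : Measurable Real.sign :=
  Measurable.ite measurableSet_Iio measurable_const
    (Measurable.ite measurableSet_Ioi measurable_const measurable_const)

theorem measurable_AkInt (α k τ x y : ℝ) : Measurable (AkInt α k τ x y) := by
  have h_sign := measurable_real_sign
  unfold AkInt
  fun_prop

theorem abs_rpow_le_one_add_sq_rpow {r : ℝ} (hr : 0 ≤ r) (ξ : ℝ) :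
    |ξ| ^ r ≤ (1 + ξ ^ 2) ^ (r / 2) := by
  calc |ξ| ^ r = (ξ ^ 2) ^ (r / 2) := by
        rw [← sq_abs, ← Real.rpow_natCast_mul (abs_nonneg ξ)]
        congr 1
        push_cast
        ring
    _ ≤ (1 + ξ ^ 2) ^ (r / 2) := by
        gcongr
        exact le_add_of_nonneg_left zero_le_one

theorem akAmplitude_le (hα : 0 ≤ α) (k ξ : ℝ) :
    akAmplitude α k ξ ≤ 2 ^ (2⁻¹ : ℝ) * (1 + ξ ^ 2) ^ ((1 + α) / 4 - k) := by
  have hpos : 0 < 1 + ξ ^ 2 := by positivity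
  have h_disp : 1 + |ξ| ^ α ≤ 2 * (1 + ξ ^ 2) ^ (α / 2) := by
    linarith [abs_rpow_le_one_add_sq_rpow hα ξ,
      Real.one_le_rpow (le_add_of_nonneg_right (sq_nonneg ξ)) (by positivity : 0 ≤ α / 2)]
  calc akAmplitude α k ξ
      ≤ (1 + ξ ^ 2) ^ ((2⁻¹ : ℝ) / 2) * (2 * (1 + ξ ^ 2) ^ (α / 2)) ^ (2⁻¹ : ℝ) *
          (1 + ξ ^ 2) ^ (-k) := by
        unfold akAmplitude
        gcongr
        exact abs_rpow_le_one_add_sq_rpow (by norm_num) ξ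
    _ = 2 ^ (2⁻¹ : ℝ) * ((1 + ξ ^ 2) ^ ((2⁻¹ : ℝ) / 2) * (1 + ξ ^ 2) ^ (α / 2 * 2⁻¹) *
          (1 + ξ ^ 2) ^ (-k)) := by
        rw [Real.mul_rpow zero_le_two (by positivity), ← Real.rpow_mul hpos.le]
        ring
    _ = 2 ^ (2⁻¹ : ℝ) * (1 + ξ ^ 2) ^ ((1 + α) / 4 - k) := by
        rw [← Real.rpow_add hpos, ← Real.rpow_add hpos]
        congr 2
        ring

theorem integrable_akAmplitude (hα : 0 ≤ α) (hk : (α + 3) / 4 < k) :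
    Integrable (akAmplitude α k) := by
  have h_exponent : (Module.finrank ℝ ℝ : ℝ) < 2 * (k - (1 + α) / 4) := by
    rw [Module.finrank_self, Nat.cast_one]
    linarith
  refine ((integrable_rpow_neg_one_add_norm_sq (μ := volume) h_exponent).const_mul
    (2 ^ (2⁻¹ : ℝ))).mono' (by unfold akAmplitude; fun_prop) (.of_forall fun ξ => ?_)
  rw [Real.norm_of_nonneg (akAmplitude_nonneg α k ξ), Real.norm_eq_abs, sq_abs,
    show -(2 * (k - (1 + α) / 4)) / 2 = (1 + α) / 4 - k by ring]
  exact akAmplitude_le hα k ξ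

theorem norm_Ak_le (hα : 0 ≤ α) (hk : (α + 3) / 4 < k) (hτ : 0 ≤ τ) (x y : ℝ) :
    ‖Ak α k τ x y‖ ≤ (∫ ξ, akAmplitude α k ξ) * τ ^ (-(2⁻¹) : ℝ) := by
  rw [Ak, norm_mul, Complex.norm_of_nonneg (Real.rpow_nonneg hτ _), mul_comm]
  gcongr
  exact norm_integral_le_of_norm_le (integrable_akAmplitude hα hk)
    (.of_forall fun ξ => (norm_AkInt α k τ x y ξ).le)

theorem continuousAt_akPhase (α ξ : ℝ) {z : ℝ × ℝ × ℝ} (hz : 0 < z.1) :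
    ContinuousAt (fun z : ℝ × ℝ × ℝ => akPhase α z.1 z.2.1 z.2.2 ξ) z := by
  have h_ne : 4 * z.1 ≠ 0 := by positivity
  unfold akPhase
  fun_prop (disch := assumption)

theorem continuousAt_Ak (hα : 0 ≤ α) (hk : (α + 3) / 4 < k) {z : ℝ × ℝ × ℝ} (hz : 0 < z.1) :
    ContinuousAt (fun z : ℝ × ℝ × ℝ => Ak α k z.1 z.2.1 z.2.2) z := by
  refine ContinuousAt.mul (Complex.continuous_ofReal.continuousAt.comp
    (continuousAt_fst.rpow_const (.inl hz.ne'))) ?_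
  refine continuousAt_of_dominated
    (.of_forall fun z => (measurable_AkInt α k z.1 z.2.1 z.2.2).aestronglyMeasurable)
    (.of_forall fun z => .of_forall fun ξ => (norm_AkInt α k z.1 z.2.1 z.2.2 ξ).le)
    (integrable_akAmplitude hα hk) (.of_forall fun ξ => ?_)
  simp only [AkInt_eq_exp_akPhase_mul_akAmplitude]
  have h_phase := continuousAt_akPhase α ξ hz
  fun_prop

theorem tendsto_Ak_cocompact (α k τ y : ℝ) :
    Tendsto (fun x => Ak α k τ x y) (cocompact ℝ) (𝓝 0) := by
  have h_RL := (tendsto_integral_exp_I_mul_smul_cocompact (AkInt α k τ 0 y)).const_mul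
    ((τ ^ (-(2⁻¹) : ℝ) : ℝ) : ℂ)
  unfold Ak
  simpa only [smul_eq_mul, ← AkInt_eq_exp_mul_AkInt_zero, mul_zero] using h_RL

theorem tendsto_Ak_sub_cocompact (α k τ x' y : ℝ) :
    Tendsto (fun x => Ak α k τ (x - x') y) (cocompact ℝ) (𝓝 0) :=
  (tendsto_Ak_cocompact α k τ y).comp
    (Homeomorph.subRight x').isClosedEmbedding.tendsto_cocompact

theorem continuous_Ak (hα : 0 ≤ α) (hk : (α + 3) / 4 < k) (hτ : 0 < τ) :
    Continuous fun q : ℝ × ℝ => Ak α k τ q.1 q.2 :=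
  continuous_iff_continuousAt.2 fun q =>
    (continuousAt_Ak hα hk (z := (τ, q)) hτ).comp (f := Prod.mk τ) (by fun_prop)

theorem isDominatedKernel_Ak (hα : 0 ≤ α) (hk : (α + 3) / 4 < k) (t : ℝ) :
    IsDominatedKernel (fun (s : ℝ) (q p : ℝ × ℝ) => Ak α k (t - s) (q.1 - p.1) (q.2 - p.2))
      (fun s => (∫ ξ, akAmplitude α k ξ) * (t - s) ^ (-(2⁻¹) : ℝ)) (Ioo 0 t) volume where
  aestronglyMeasurable s hs q :=
    ((continuous_Ak hα hk (sub_pos.2 hs.2)).comp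
      (f := fun p : ℝ × ℝ => (q.1 - p.1, q.2 - p.2)) (by fun_prop)).aestronglyMeasurable
  continuousOn q p s hs :=
    ((continuousAt_Ak hα hk (z := (t - s, q.1 - p.1, q.2 - p.2)) (sub_pos.2 hs.2)).comp
      (f := fun s : ℝ => (t - s, q.1 - p.1, q.2 - p.2)) (by fun_prop)).continuousWithinAt
  continuousOn_bound := continuousOn_const.mul <|
    (continuousOn_const.sub continuousOn_id).rpow_const fun _ hs => .inl (sub_pos.2 hs.2).ne'
  norm_le _ hs _ _ := norm_Ak_le hα hk (sub_nonneg.2 hs.2.le) _ _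

end Kernel

theorem KPBBM_duhamel_term_general {E : Type*} [NormedAddCommGroup E] [NormedSpace ℂ E]
    [CompleteSpace E] {α k t : ℝ} (hα : 0 ≤ α) (hk : (α + 3) / 4 < k) {h : ℝ → ℝ × ℝ → E}
    (hh : L1ContinuousOn h (Ioo 0 t) volume)
    (hh_int : IntegrableOn (fun s => (t - s) ^ (-(2⁻¹) : ℝ) * ∫ p, ‖h s p‖) (Ioo 0 t)) :
    (∃ C : ℝ, ∀ s ∈ Ioo 0 t, ∀ x y : ℝ,
      Integrable (fun p : ℝ × ℝ => Ak α k (t - s) (x - p.1) (y - p.2) • h s p) ∧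
      ‖∫ p : ℝ × ℝ, Ak α k (t - s) (x - p.1) (y - p.2) • h s p‖ ≤
        C * (t - s) ^ (-(2⁻¹) : ℝ) * ∫ p : ℝ × ℝ, ‖h s p‖) ∧
    (∀ x y : ℝ, IntegrableOn
      (fun s : ℝ => ∫ p : ℝ × ℝ, Ak α k (t - s) (x - p.1) (y - p.2) • h s p) (Ioo 0 t)) ∧
    Continuous (fun q : ℝ × ℝ => ∫ s in Ioo 0 t,
      ∫ p : ℝ × ℝ, Ak α k (t - s) (q.1 - p.1) (q.2 - p.2) • h s p) ∧
    (∃ C : ℝ, ∀ x y : ℝ, ‖∫ s in Ioo 0 t,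
      ∫ p : ℝ × ℝ, Ak α k (t - s) (x - p.1) (y - p.2) • h s p‖ ≤ C) ∧
    (∀ y : ℝ, Tendsto (fun x : ℝ => ∫ s in Ioo 0 t,
      ∫ p : ℝ × ℝ, Ak α k (t - s) (x - p.1) (y - p.2) • h s p) (cocompact ℝ) (𝓝 0)) := by
  have hK := isDominatedKernel_Ak hα hk t
  have hb : IntegrableOn (fun s => (∫ ξ, akAmplitude α k ξ) * (t - s) ^ (-(2⁻¹) : ℝ) *
      ∫ p, ‖h s p‖) (Ioo 0 t) := by
    simp only [mul_assoc]
    exact hh_int.const_mul _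
  refine ⟨⟨∫ ξ, akAmplitude α k ξ, fun s hs x y =>
      ⟨hK.integrable_smul hs (x, y) (hh.integrable s hs),
        hK.norm_integral_smul_le hs (x, y) (hh.integrable s hs)⟩⟩,
    fun x y => hK.integrableOn_integral_smul measurableSet_Ioo hh hb (x, y),
    hK.continuous_setIntegral_integral_smul measurableSet_Ioo hh hb fun s hs p =>
      (continuous_Ak hα hk (sub_pos.2 hs.2)).comp
        (f := fun q : ℝ × ℝ => (q.1 - p.1, q.2 - p.2)) (by fun_prop),
    ⟨_, fun x y => hK.norm_setIntegral_integral_smul_le measurableSet_Ioo hh.integrable hb (x, y)⟩,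
    fun y => ?_⟩
  simpa only [zero_smul, integral_zero] using
    hK.tendsto_setIntegral_integral_smul measurableSet_Ioo hh hb (u := fun x => (x, y))
      fun s _ p => tendsto_Ak_sub_cocompact α k (t - s) p.1 (y - p.2)

/-- Duhamel term for KP-BBM type equations: for `α > 0`, `k > (α+3)/4` and
`h : [0,T] → L¹(ℝ²)` continuous, for each `t ∈ (0,T]` the function
`V(t,x,y) = ∫_0^t ∫_{ℝ²} Ã_k(t-s, x-x', y-y') h(s,x',y') dx'dy'ds` is well defined,
continuous and bounded in `(x,y)`, and tends to `0` as `|x| → ∞` for fixed `y`. -/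
theorem KPBBM_duhamel_term (α k T : ℝ) (hα : 0 < α) (hk : (α + 3) / 4 < k) (hT : 0 < T)
    (h : ℝ → ℝ × ℝ → ℂ)
    (hInt : ∀ s ∈ Set.Icc (0 : ℝ) T, Integrable (h s))
    (hCont : ∀ s ∈ Set.Icc (0 : ℝ) T,
      Tendsto (fun s' : ℝ => ∫ p : ℝ × ℝ, ‖h s' p - h s p‖)
        (nhdsWithin s (Set.Icc (0 : ℝ) T)) (nhds 0)) :
    ∀ t ∈ Set.Ioc (0 : ℝ) T,
      (∃ C : ℝ, ∀ s ∈ Set.Ioo (0 : ℝ) t, ∀ x y : ℝ,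
        Integrable (fun p : ℝ × ℝ => Ak α k (t - s) (x - p.1) (y - p.2) * h s p) ∧
        ‖∫ p : ℝ × ℝ, Ak α k (t - s) (x - p.1) (y - p.2) * h s p‖ ≤
          C * (t - s) ^ (-(2⁻¹) : ℝ) * ∫ p : ℝ × ℝ, ‖h s p‖) ∧
      (∀ x y : ℝ, IntegrableOn
        (fun s : ℝ => ∫ p : ℝ × ℝ, Ak α k (t - s) (x - p.1) (y - p.2) * h s p)
        (Set.Ioo (0 : ℝ) t)) ∧
      Continuous (fun q : ℝ × ℝ => ∫ s in Set.Ioo (0 : ℝ) t,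
        ∫ p : ℝ × ℝ, Ak α k (t - s) (q.1 - p.1) (q.2 - p.2) * h s p) ∧
      (∃ C : ℝ, ∀ x y : ℝ,
        ‖∫ s in Set.Ioo (0 : ℝ) t,
            ∫ p : ℝ × ℝ, Ak α k (t - s) (x - p.1) (y - p.2) * h s p‖ ≤ C) ∧
      (∀ y : ℝ, Tendsto (fun x : ℝ => ∫ s in Set.Ioo (0 : ℝ) t,
          ∫ p : ℝ × ℝ, Ak α k (t - s) (x - p.1) (y - p.2) * h s p)
        (cocompact ℝ) (nhds 0)) := by
  intro t ht
  have hh : L1ContinuousOn h (Icc 0 t) volume :=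
    (L1ContinuousOn.mk hInt hCont).mono (Icc_subset_Icc_right ht.2)
  exact KPBBM_duhamel_term_general hα.le hk (hh.mono Ioo_subset_Icc_self)
    (hh.integrableOn_sub_rpow_mul_integral_norm (by norm_num) ht.1.le)
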